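/- The subspace U = {(0,0,0,d,e,f) : d,e,f ∈ F_2} of W'^* is a G-submodule under the action D, and the short exact sequence of G-modules 0 → U → W'^* → W'^*/U → 0 does not split: U has no G-invariant complement in W'^*. -/

import Mathlib

set_option synthInstance.maxHeartbeats 1000000
set_option maxHeartbeats 1000000

open MvPolynomial

/-- The field with two elements. -/
abbrev F2 := ZMod 2

/-- `G = GL₃(𝔽₂)`. -/
abbrev G3 := GL (Fin 3) F2

/-- The generator `A` of `G`. -/
def Agen : G3 := ⟨!![1,0,1; 0,1,0; 0,0,1], !![1,0,1; 0,1,0; 0,0,1], by decide, by decide⟩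

/-- The generator `B` of `G`. -/
def Bgen : G3 := ⟨!![0,0,1; 1,0,0; 0,1,0], !![0,1,0; 0,0,1; 1,0,0], by decide, by decide⟩

/-- The matrix `D(A)` of the action on `W'^* = 𝔽₂⁶`. -/
def DA6 : Matrix (Fin 6) (Fin 6) F2 :=
  !![1,0,1,0,0,1; 0,1,0,0,0,0; 0,0,1,0,0,0; 0,0,0,1,1,0; 0,0,0,0,1,0; 0,0,0,0,0,1]

/-- The matrix `D(B)` of the action on `W'^* = 𝔽₂⁶`. -/
def DB6 : Matrix (Fin 6) (Fin 6) F2 :=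
  !![0,0,1,0,0,0; 1,0,0,0,0,0; 0,1,0,0,0,0; 0,0,0,0,0,1; 0,0,0,1,0,0; 0,0,0,0,1,0]

/-- The algebra endomorphism of `S[W'^*] = 𝔽₂[a,b,c,d,e,f]` induced by the right action of
`σ` on the linear forms (coefficient row vectors are multiplied on the right by `D σ`; in
particular the variable `Xᵢ` is sent to the linear form given by the `i`-th row of `D σ`). -/
noncomputable def polyAct (D : G3 →* GL (Fin 6) F2) (σ : G3) :
    MvPolynomial (Fin 6) F2 →ₐ[F2] MvPolynomial (Fin 6) F2 :=
  aeval (fun i => ∑ j, (D σ : Matrix (Fin 6) (Fin 6) F2) i j • X j)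

/-- The invariant ring `S[W'^*]^H` for a subgroup `H ≤ G`. -/
noncomputable def invH (D : G3 →* GL (Fin 6) F2) (H : Subgroup G3) :
    Subalgebra F2 (MvPolynomial (Fin 6) F2) where
  carrier := {p | ∀ σ ∈ H, polyAct D σ p = p}
  mul_mem' := fun ha hb σ hσ => by rw [map_mul, ha σ hσ, hb σ hσ]
  add_mem' := fun ha hb σ hσ => by rw [map_add, ha σ hσ, hb σ hσ]
  one_mem' := fun σ _ => map_one _
  zero_mem' := fun σ _ => map_zero _
  algebraMap_mem' := fun r σ _ => AlgHom.commutes _ r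

/-- The invariant ring `S[W'^*]^G`. -/
noncomputable def invG (D : G3 →* GL (Fin 6) F2) :
    Subalgebra F2 (MvPolynomial (Fin 6) F2) :=
  invH D ⊤

/-- The subspace `U = {(0,0,0,d,e,f)} ⊆ W'^* = 𝔽₂⁶`. -/
def Usub : Submodule F2 (Fin 6 → F2) where
  carrier := {w | w 0 = 0 ∧ w 1 = 0 ∧ w 2 = 0}
  add_mem' := by
    intro a b ha hb
    obtain ⟨h1, h2, h3⟩ := ha
    obtain ⟨h4, h5, h6⟩ := hb
    refine ⟨?_, ?_, ?_⟩ <;>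
      simp only [Pi.add_apply, h1, h2, h3, h4, h5, h6, add_zero]
  zero_mem' := ⟨rfl, rfl, rfl⟩
  smul_mem' := by
    intro c a ha
    obtain ⟨h1, h2, h3⟩ := ha
    refine ⟨?_, ?_, ?_⟩ <;>
      simp only [Pi.smul_apply, h1, h2, h3, smul_eq_mul, mul_zero]

theorem gen_transvec (i j : Fin 3) (hij : i ≠ j) (σ : G3)
    (h : (σ : Matrix (Fin 3) (Fin 3) F2) = Matrix.transvection i j 1) :
    σ ∈ Subgroup.closure {Agen, Bgen} := by
  have hA : Agen ∈ Subgroup.closure {Agen, Bgen} := Subgroup.subset_closure (by simp)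
  have hB : Bgen ∈ Subgroup.closure {Agen, Bgen} := Subgroup.subset_closure (by simp)
  generalize Subgroup.closure {Agen, Bgen} = K at *
  have h1 : Bgen * Agen * Bgen⁻¹ ∈ K := K.mul_mem (K.mul_mem hB hA) (K.inv_mem hB)
  have h2 : Bgen⁻¹ * Agen * Bgen ∈ K := K.mul_mem (K.mul_mem (K.inv_mem hB) hA) hB
  have comm : ∀ x y, x ∈ K → y ∈ K → x * y * x⁻¹ * y⁻¹ ∈ K := fun x y hx hy =>
    K.mul_mem (K.mul_mem (K.mul_mem hx hy) (K.inv_mem hx)) (K.inv_mem hy)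
  have h3 := comm _ _ hA h1
  have h4 := comm _ _ hA h2
  have h5 := comm _ _ h1 h2
  have key : ∀ τ : G3, τ ∈ K → (τ : Matrix (Fin 3) (Fin 3) F2) = Matrix.transvection i j 1 →
      σ ∈ K := by
    intro τ hτ e
    have : σ = τ := Units.ext (h.trans e.symm)
    exact this ▸ hτ
  clear h
  fin_cases i <;> fin_cases j <;>
    first
    | exact absurd rfl hij
    | exact key _ hA (by decide)
    | exact key _ h1 (by decide)
    | exact key _ h2 (by decide)
    | exact key _ h3 (by decide)
    | exact key _ h4 (by decide)
    | exact key _ h5 (by decide)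

theorem gen_all (σ : G3) : σ ∈ Subgroup.closure {Agen, Bgen} := by
  have f2 : ∀ x : F2, x = 0 ∨ x = 1 := by decide
  have hdet : ∀ τ : G3, (τ : Matrix (Fin 3) (Fin 3) F2).det ≠ 0 := fun τ =>
    ((Matrix.isUnit_iff_isUnit_det _).1 τ.isUnit).ne_zero
  refine Matrix.diagonal_transvection_induction_of_det_ne_zero
    (fun M => ∀ τ : G3, (τ : Matrix (Fin 3) (Fin 3) F2) = M →
      τ ∈ Subgroup.closure {Agen, Bgen}) (σ : Matrix (Fin 3) (Fin 3) F2) (hdet σ)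
    ?_ ?_ ?_ σ rfl
  · intro d hd τ hτ
    have : d = 1 := by
      funext i
      rw [Matrix.det_diagonal, Finset.prod_ne_zero_iff] at hd
      exact (f2 (d i)).resolve_left (hd i (Finset.mem_univ i))
    have : τ = 1 := by
      apply Units.ext
      rw [hτ, this]
      exact Matrix.diagonal_one
    rw [this]; exact one_mem _
  · rintro ⟨i, j, hij, c⟩ τ hτ
    rcases f2 c with rfl | rfl
    · have : τ = 1 := by
        apply Units.ext
        rw [hτ]
        simp [Matrix.TransvectionStruct.toMatrix]
      rw [this]; exact one_mem _
    · exact gen_transvec i j hij τ hτ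
  · intro M N hM hN iM iN τ hτ
    have e : τ = Matrix.GeneralLinearGroup.mkOfDetNeZero M hM *
        Matrix.GeneralLinearGroup.mkOfDetNeZero N hN := Units.ext hτ
    rw [e]
    exact mul_mem (iM _ rfl) (iN _ rfl)

theorem vecDA (w : Fin 6 → F2) : Matrix.vecMul w DA6 =
    ![w 0, w 1, w 0 + w 2, w 3, w 3 + w 4, w 0 + w 5] := by
  funext i
  fin_cases i <;> simp [DA6, Matrix.vecMul, dotProduct, Fin.sum_univ_succ]

theorem vecDB (w : Fin 6 → F2) : Matrix.vecMul w DB6 =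
    ![w 1, w 2, w 0, w 4, w 5, w 3] := by
  funext i
  fin_cases i <;> simp [DB6, Matrix.vecMul, dotProduct, Fin.sum_univ_succ]

theorem mem_U (w : Fin 6 → F2) : w ∈ Usub ↔ w 0 = 0 ∧ w 1 = 0 ∧ w 2 = 0 := Iff.rfl

theorem U_inv (D : G3 →* GL (Fin 6) F2)
    (hA : (D Agen : Matrix (Fin 6) (Fin 6) F2) = DA6)
    (hB : (D Bgen : Matrix (Fin 6) (Fin 6) F2) = DB6) (σ : G3) :
    ∀ w ∈ Usub, Matrix.vecMul w (D σ : Matrix (Fin 6) (Fin 6) F2) ∈ Usub := by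
  have hσ := gen_all σ
  have fin : ∀ x : G3, x ∈ Submonoid.closure {Agen, Bgen} →
      ∀ w ∈ Usub, Matrix.vecMul w (D x : Matrix (Fin 6) (Fin 6) F2) ∈ Usub := by
    intro x hx
    induction hx using Submonoid.closure_induction with
    | mem x hx =>
      intro w hw
      obtain ⟨h0, h1, h2⟩ := (mem_U w).1 hw
      rcases hx with rfl | rfl
      · rw [hA, vecDA, mem_U]; simp [h0, h1, h2]
      · rw [hB, vecDB, mem_U]; simp [h0, h1, h2]
    | one => intro w hw; simpa using hw
    | mul x y _ _ ix iy =>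
      intro w hw
      rw [map_mul, Units.val_mul, ← Matrix.vecMul_vecMul]
      exact iy _ (ix _ hw)
  apply fin
  rw [← Subgroup.mem_toSubmonoid, Subgroup.closure_toSubmonoid_of_finite] at hσ
  exact hσ

/-- The subspace `U = {(0,0,0,d,e,f)}` of `W'^*` is a `G`-submodule
under the action `D`, and the short exact sequence of `G`-modules
`0 → U → W'^* → W'^*/U → 0` does not split: `U` has no `G`-invariant complement in
`W'^*`. -/
theorem stmt18 (D : G3 →* GL (Fin 6) F2)
    (hA : (D Agen : Matrix (Fin 6) (Fin 6) F2) = DA6)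
    (hB : (D Bgen : Matrix (Fin 6) (Fin 6) F2) = DB6) :
    -- `U` is a `G`-submodule …
    (∀ σ : G3, ∀ w ∈ Usub, Matrix.vecMul w (D σ : Matrix (Fin 6) (Fin 6) F2) ∈ Usub) ∧
    -- … without any `G`-invariant complement:
    ¬ ∃ C : Submodule F2 (Fin 6 → F2),
        (∀ σ : G3, ∀ w ∈ C, Matrix.vecMul w (D σ : Matrix (Fin 6) (Fin 6) F2) ∈ C) ∧
        IsCompl Usub C := by
  refine ⟨U_inv D hA hB, ?_⟩
  rintro ⟨C, hC, hUC⟩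
  have cA : ∀ w ∈ C, ![w 0, w 1, w 0 + w 2, w 3, w 3 + w 4, w 0 + w 5] ∈ C := by
    intro w hw
    have := hC Agen w hw
    rwa [hA, vecDA] at this
  have cB : ∀ w ∈ C, ![w 1, w 2, w 0, w 4, w 5, w 3] ∈ C := by
    intro w hw
    have := hC Bgen w hw
    rwa [hB, vecDB] at this
  have hz : ∀ w ∈ C, w 0 = 0 → w 1 = 0 → w 2 = 0 → w = 0 := fun w hw h0 h1 h2 =>
    Submodule.disjoint_def.1 hUC.disjoint w ⟨h0, h1, h2⟩ hw
  have htop : (![1,0,0,0,0,0] : Fin 6 → F2) ∈ Usub ⊔ C := by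
    rw [hUC.sup_eq_top]; trivial
  obtain ⟨u, hu, v, hv, huv⟩ := Submodule.mem_sup.1 htop
  obtain ⟨u0, u1, u2⟩ := (mem_U u).1 hu
  have v0 : v 0 = 1 := by have := congrFun huv 0; simpa [u0] using this
  have v1 : v 1 = 0 := by have := congrFun huv 1; simpa [u1] using this
  have v2 : v 2 = 0 := by have := congrFun huv 2; simpa [u2] using this
  have ev : v = ![1, 0, 0, v 3, v 4, v 5] := by
    funext i
    fin_cases i
    exacts [v0, v1, v2, rfl, rfl, rfl]
  generalize v 3 = x at ev
  generalize v 4 = y at ev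
  generalize v 5 = z at ev
  subst ev
  have a := cA _ hv
  have b := cB _ hv
  have b2 := cB _ b
  have ba := cA _ b2
  have e1 := hz _ (C.sub_mem (C.sub_mem a hv) b) (by simp) (by simp) (by simp)
  have e2 := hz _ (C.sub_mem ba b2) (by simp) (by simp) (by simp)
  clear * - e1 e2
  revert x y z
  decide
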